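/- If Uη = qηU for a degree-0 element U and degree-1 element η, then d_q^N U = (1−q)(1−q^2)⋯(1−q^{N−1})(η^N U − U η^N). In particular, if η^N is central (e.g. η^N = 1), then d_q^N U = 0 whenever N ≥ 2. -/

import Mathlib

/-- The `q`-differential of a homogeneous element `B` of degree `b`:
`d_q B = η B - q^b B η`. -/
noncomputable def dq {A : Type*} [Ring A] [Algebra ℂ A] (q : ℂ) (η : A) (b : ℕ) (B : A) : A :=
  η * B - q ^ b • (B * η)

/-- Iterated `q`-differential `d_q^n` applied to an element of degree `b`
(each application raises the degree by one). -/
noncomputable def dqPow {A : Type*} [Ring A] [Algebra ℂ A] (q : ℂ) (η : A) (b : ℕ) :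
    ℕ → A → A
  | 0, B => B
  | n + 1, B => dq q η (b + n) (dqPow q η b n B)

theorem U_mul_pow_aux {A : Type*} [Ring A] [Algebra ℂ A]
    (q : ℂ) (U η : A) (hUη : U * η = q • (η * U)) (n : ℕ) :
    U * η ^ n = q ^ n • (η ^ n * U) := by
  induction n with
  | zero => simp
  | succ n ih =>
    rw [pow_succ, ← mul_assoc, ih, smul_mul_assoc, mul_assoc, hUη, mul_smul_comm, smul_smul,
      ← mul_assoc, ← pow_succ, ← pow_succ]

theorem dqPow_aux {A : Type*} [Ring A] [Algebra ℂ A]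
    (q : ℂ) (U η : A) (hUη : U * η = q • (η * U)) (n : ℕ) :
    dqPow q η 0 n U = (∏ k ∈ Finset.Icc 1 n, (1 - q ^ k)) • (η ^ n * U) := by
  induction n with
  | zero => simp [dqPow]
  | succ n ih =>
    have h : η ^ n * U * η = q • (η ^ (n + 1) * U) := by
      rw [mul_assoc, hUη, mul_smul_comm, ← mul_assoc, ← pow_succ]
    rw [dqPow, ih, dq, Finset.prod_Icc_succ_top (by omega), mul_smul_comm, smul_mul_assoc, h,
      ← mul_assoc, ← pow_succ', smul_smul, smul_smul, ← sub_smul]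
    congr 1
    ring

/-- if `U η = q η U` with `deg U = 0`, `deg η = 1`, then
`d_q^N U = (1−q)(1−q^2)⋯(1−q^{N−1}) (η^N U − U η^N)`; in particular, if `η^N` is central
(e.g. `η^N = 1`) then `d_q^N U = 0` whenever `N ≥ 2`. -/
theorem dqPow_U {A : Type*} [Ring A] [Algebra ℂ A]
    (q : ℂ) (U η : A) (hUη : U * η = q • (η * U)) (N : ℕ) (hN : 1 ≤ N) :
    dqPow q η 0 N U =
      (∏ k ∈ Finset.Icc 1 (N - 1), (1 - q ^ k)) • (η ^ N * U - U * η ^ N) ∧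
    ((∀ x : A, Commute (η ^ N) x) → 2 ≤ N → dqPow q η 0 N U = 0) := by
  have main : dqPow q η 0 N U =
      (∏ k ∈ Finset.Icc 1 (N - 1), (1 - q ^ k)) • (η ^ N * U - U * η ^ N) := by
    rw [dqPow_aux q U η hUη, U_mul_pow_aux q U η hUη]
    obtain ⟨n, rfl⟩ : ∃ n, N = n + 1 := ⟨N - 1, by omega⟩
    rw [Finset.prod_Icc_succ_top (by omega), Nat.add_sub_cancel, mul_smul, sub_smul, one_smul]
  refine ⟨main, fun hc _ => ?_⟩
  rw [main, (hc U).eq, sub_self, smul_zero]
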